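/- arXiv:2502.13331 — 3 statements merged into one kernel-verified Lean document; each statement's English description precedes it below -/
import Mathlib

section
/- Let q be a prime power with q ≡ 1 (mod 20) and let β be a primitive 5th root of unity in F_q. Then (q,5) gives a 3-design if and only if χ(1+β) = −1, where χ is the quadratic residue character of F_q. -/
/-!
Setting: `F` is a finite field of order `q`. The projective line `PG(1,q)` is
modelled as `Projectivization F (Fin 2 → F)`. Since scalar matrices act trivially
on the projective line, the images of a set under all elements of `SL(2,F)` form
exactly its `PSL(2,F)`-orbit; `mapSL g` is the map of the projective line induced
by `g : SL(2,F)`. For `k ∣ q - 1`, the unique subgroup of order `k` of `Fˣ` is the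
set of `k`-th roots of unity `{x : F | x ^ k = 1}`, embedded into the projective
line via `x ↦ [x : 1]`. `(q, k)` gives a 3-design iff there is `lam > 0` such that
every 3-subset of the projective line lies in exactly `lam` blocks of the orbit.
-/

noncomputable section

open Matrix

/-- The point at infinity `[1 : 0]` of the projective line over `F`. -/
def inftyPt (F : Type) [Field F] : Projectivization F (Fin 2 → F) :=
  Projectivization.mk F ![1, 0] (by
    intro h
    simpa using congrFun h 0)

/-- The embedding of `F` into the projective line, `x ↦ [x : 1]`. -/
def embedPt (F : Type) [Field F] (x : F) : Projectivization F (Fin 2 → F) :=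
  Projectivization.mk F ![x, 1] (by
    intro h
    simpa using congrFun h 1)

/-- The action of `g : SL(2,F)` on the projective line (as linear fractional
transformation). -/
def mapSL {F : Type} [Field F] (g : Matrix.SpecialLinearGroup (Fin 2) F) :
    Projectivization F (Fin 2 → F) → Projectivization F (Fin 2 → F) :=
  Projectivization.map (Matrix.SpecialLinearGroup.toLin' g : (Fin 2 → F) →ₗ[F] (Fin 2 → F))
    (Matrix.SpecialLinearGroup.toLin' g).injective

/-- The starter block: the unique subgroup of order `k` of `Fˣ` (the `k`-th roots
of unity, for `k ∣ q - 1`), regarded as a subset of the projective line. -/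
def starterB (F : Type) [Field F] (k : ℕ) : Set (Projectivization F (Fin 2 → F)) :=
  embedPt F '' {x : F | x ^ k = 1}

/-- The `PSL(2,F)`-orbit `GB` of the starter block. -/
def designBlocks (F : Type) [Field F] (k : ℕ) :
    Set (Set (Projectivization F (Fin 2 → F))) :=
  {S | ∃ g : Matrix.SpecialLinearGroup (Fin 2) F, S = mapSL g '' starterB F k}

/-- `GB` is the block set of a `3-(q+1, k, lam)` design: `lam` is positive and every
3-subset of the projective line is contained in exactly `lam` blocks. -/
def isThreeDesign (F : Type) [Field F] (k lam : ℕ) : Prop :=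
  0 < lam ∧
    ∀ T : Finset (Projectivization F (Fin 2 → F)), T.card = 3 →
      {S ∈ designBlocks F k | (T : Set (Projectivization F (Fin 2 → F))) ⊆ S}.ncard = lam

/-- `(q, k)` gives a 3-design. -/
def gives3Design (F : Type) [Field F] (k : ℕ) : Prop :=
  ∃ lam : ℕ, isThreeDesign F k lam

/-!
The sign `χ(det(v₀,v₁) det(v₁,v₂) det(v₂,v₀))` of an ordered triple of points, represented by
vectors `vᵢ`, is independent of the representatives, and `g ∈ GL(2,F)` multiplies it by `χ(det g)`.
As `GL(2,F)` is transitive on ordered triples of distinct points, `SL(2,F)` has two orbits on them,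
one for each sign, and these are equally large. Double counting the incidences between a sign class
and the blocks shows that the orbit of `B` is a 3-design iff `B` contains equally many triples of
sign `1` and of sign `-1`, and at least one of each.

For `x : Fin 3 → F` the sign of the triple of points `[x i : 1]` is `∏ i, χ(x i - x (i + 1))`. If
`r` is a primitive fifth root of unity, then `(1 + r)(1 + r²) = -r⁴` is a square because
`q ≡ 1 (mod 4)`, hence `χ(1 + r²) = χ(1 + r)`. Since `2` generates `(ℤ/5)ˣ`, it follows that
`χ(x + y) = χ(1 + β)` for all fifth roots of unity `x ≠ y`, so `χ(x² - y²) = χ(1 + β) χ(x - y)`. If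
`χ(1 + β) = -1`, squaring thus exchanges the triples of fifth roots of unity of sign `1` with those
of sign `-1`. If `χ(1 + β) = 1`, then `χ(x - y)` takes the same value `χ(1 - β)` for all `x ≠ y`, so
all triples of distinct fifth roots of unity have the same sign.
-/

open scoped Pointwise MatrixGroups LinearAlgebra.Projectivization

section OrbitIncidence

variable {G α β : Type*} [Group G] [MulAction G α] [MulAction G β] {r : α → β → Prop}

lemma orbit_sep_smul (hr : ∀ (g : G) a b, r (g • a) (g • b) ↔ r a b) (g : G) (a : α) (b : β) :
    {b' ∈ MulAction.orbit G b | r (g • a) b'} = g • {b' ∈ MulAction.orbit G b | r a b'} := by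
  ext b'
  have mem_orbit_iff : b' ∈ MulAction.orbit G b ↔ g⁻¹ • b' ∈ MulAction.orbit G b := by
    rw [← Set.mem_smul_set_iff_inv_smul_mem, MulAction.smul_orbit]
  have incident_iff : r (g • a) b' ↔ r a (g⁻¹ • b') := by rw [← hr g a, smul_inv_smul]
  rw [Set.mem_smul_set_iff_inv_smul_mem]
  exact and_congr mem_orbit_iff incident_iff

theorem ncard_orbit_mul_ncard_incident [Finite α] [Finite β]
    (hr : ∀ (g : G) a b, r (g • a) (g • b) ↔ r a b) (a : α) (b : β) :
    (MulAction.orbit G a).ncard * {b' ∈ MulAction.orbit G b | r a b'}.ncard =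
      (MulAction.orbit G b).ncard * {a' ∈ MulAction.orbit G a | r a' b}.ncard := by
  classical
  have := Fintype.ofFinite α
  have := Fintype.ofFinite β
  rw [Set.ncard_eq_toFinset_card', Set.ncard_eq_toFinset_card' (MulAction.orbit G b)]
  refine Finset.card_mul_eq_card_mul r ?_ ?_
  · intro a' ha'
    obtain ⟨g, rfl⟩ := Set.mem_toFinset.1 ha'
    rw [← Set.ncard_coe_finset, Finset.coe_bipartiteAbove,
      ← Set.ncard_smul_set g {b' ∈ MulAction.orbit G b | r a b'}, ← orbit_sep_smul hr]
    simp only [Set.mem_toFinset]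
  · intro b' hb'
    obtain ⟨g, rfl⟩ := Set.mem_toFinset.1 hb'
    rw [← Set.ncard_coe_finset, Finset.coe_bipartiteBelow,
      ← Set.ncard_smul_set g {a' ∈ MulAction.orbit G a | r a' b},
      ← orbit_sep_smul (r := fun b a ↦ r a b) fun g b a ↦ hr g a b]
    simp only [Set.mem_toFinset]

end OrbitIncidence

section TripleDet

variable {K : Type*} [Field K]

/-- The product of the determinants of cyclically consecutive members of a triple of plane vectors.
Rescaling the vectors multiplies it by a square, so its square class depends only on the triple of
points of the projective line that the vectors represent. -/
def tripleDet (v : Fin 3 → Fin 2 → K) : K :=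
  ∏ i, (of ![v i, v (i + 1)]).det

lemma tripleDet_smul (a : Fin 3 → K) (v : Fin 3 → Fin 2 → K) :
    tripleDet (fun i ↦ a i • v i) = (∏ i, a i) ^ 2 * tripleDet v := by
  simp only [tripleDet, Fin.prod_univ_three, zero_add, Fin.reduceAdd, det_fin_two, of_apply,
    cons_val', cons_val_fin_one, cons_val_zero, cons_val_one, Pi.smul_apply, smul_eq_mul]
  ring

lemma tripleDet_mulVec (A : Matrix (Fin 2) (Fin 2) K) (v : Fin 3 → Fin 2 → K) :
    tripleDet (fun i ↦ A *ᵥ v i) = A.det ^ 3 * tripleDet v := by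
  have det_pair (u w : Fin 2 → K) : (of ![A *ᵥ u, A *ᵥ w]).det = A.det * (of ![u, w]).det := by
    simp only [mulVec_fin_two, det_fin_two, of_apply, cons_val', cons_val_fin_one, cons_val_zero,
      cons_val_one]
    ring
  simp only [tripleDet, det_pair, Finset.prod_mul_distrib, Finset.prod_const, Finset.card_univ,
    Fintype.card_fin]

lemma det_rep_ne_zero_iff {X Y : ℙ K (Fin 2 → K)} :
    (of ![X.rep, Y.rep]).det ≠ 0 ↔ X ≠ Y := by
  rw [← Projectivization.linearIndependent_pair_iff_ne, ← isUnit_iff_ne_zero,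
    ← isUnit_iff_isUnit_det, ← linearIndependent_rows_iff_isUnit]
  rfl

lemma tripleDet_rep_ne_zero_iff {t : Fin 3 → ℙ K (Fin 2 → K)} :
    tripleDet (fun i ↦ (t i).rep) ≠ 0 ↔ Function.Injective t := by
  have injective_iff : Function.Injective t ↔ ∀ i, t i ≠ t (i + 1) := by
    refine ⟨fun ht i ↦ ht.ne (by fin_cases i <;> decide), fun ht i j hij ↦ ?_⟩
    have h₀ := ht 0
    have h₁ := ht 1
    have h₂ := ht 2
    fin_cases i <;> fin_cases j <;> simp_all
  simp [tripleDet, Finset.prod_ne_zero_iff, det_rep_ne_zero_iff, injective_iff]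

lemma exists_specialLinearGroup_smul_eq {g : GL (Fin 2) K} (hg : IsSquare g.det.val) :
    ∃ h : SL(2, K), ∀ X : ℙ K (Fin 2 → K), h • X = g • X := by
  obtain ⟨c, hc⟩ := hg
  have det_eq : g.val.det = c * c := hc
  have hc0 : c ≠ 0 := left_ne_zero_of_mul (hc ▸ g.det.ne_zero)
  let h : SL(2, K) := ⟨c⁻¹ • g.val, by rw [det_smul, det_eq, Fintype.card_fin]; field_simp⟩
  refine ⟨h, fun X ↦ ?_⟩
  induction X using Projectivization.ind with
  | h v hv =>
    rw [Projectivization.smul_mk, Projectivization.smul_mk, Projectivization.mk_eq_mk_iff']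
    exact ⟨c⁻¹, (smul_assoc c⁻¹ g.val v).symm⟩

/-- A matrix with determinant `tripleDet v` which maps `![1, 0]`, `![0, 1]` and `![1, 1]` to
multiples of `v 0`, `v 1` and `v 2`. Its columns are the two terms of the Plücker relation
`det (v 0, v 1) • v 2 = det (v 2, v 1) • v 0 + det (v 0, v 2) • v 1`. -/
def frameMatrix (v : Fin 3 → Fin 2 → K) : Matrix (Fin 2) (Fin 2) K :=
  (of ![(of ![v 2, v 1]).det • v 0, (of ![v 0, v 2]).det • v 1])ᵀ

lemma det_frameMatrix (v : Fin 3 → Fin 2 → K) : (frameMatrix v).det = tripleDet v := by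
  simp only [frameMatrix, tripleDet, Fin.prod_univ_three, Fin.reduceAdd, det_transpose, det_fin_two,
    of_apply, cons_val', cons_val_fin_one, cons_val_zero, cons_val_one, Pi.smul_apply, smul_eq_mul]
  ring

lemma frameMatrix_mulVec_one_zero (v : Fin 3 → Fin 2 → K) :
    frameMatrix v *ᵥ ![1, 0] = (of ![v 2, v 1]).det • v 0 := by
  ext j
  fin_cases j <;> simp [frameMatrix, det_fin_two]

lemma frameMatrix_mulVec_zero_one (v : Fin 3 → Fin 2 → K) :
    frameMatrix v *ᵥ ![0, 1] = (of ![v 0, v 2]).det • v 1 := by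
  ext j
  fin_cases j <;> simp [frameMatrix, det_fin_two]

lemma frameMatrix_mulVec_one_one (v : Fin 3 → Fin 2 → K) :
    frameMatrix v *ᵥ ![1, 1] = (of ![v 0, v 1]).det • v 2 := by
  ext j
  fin_cases j <;> simp [frameMatrix, det_fin_two] <;> ring

variable (K) in
/-- The ordered triple `∞, 0, 1` of points of the projective line over an arbitrary field. -/
def standardFrame : Fin 3 → ℙ K (Fin 2 → K) :=
  ![.mk K ![1, 0] (by simp), .mk K ![0, 1] (by simp), .mk K ![1, 1] (by simp)]

lemma exists_generalLinearGroup_smul_standardFrame_eq {t : Fin 3 → ℙ K (Fin 2 → K)}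
    (ht : Function.Injective t) :
    ∃ g : GL (Fin 2) K, g • standardFrame K = t := by
  let v : Fin 3 → Fin 2 → K := fun i ↦ (t i).rep
  have hdet : (frameMatrix v).det ≠ 0 := by
    rw [det_frameMatrix]
    exact tripleDet_rep_ne_zero_iff.2 ht
  refine ⟨GeneralLinearGroup.mkOfDetNeZero _ hdet, funext fun i ↦ ?_⟩
  rw [← (t i).mk_rep]
  fin_cases i
  · exact (Projectivization.mk_eq_mk_iff' ..).2 ⟨_, (frameMatrix_mulVec_one_zero v).symm⟩
  · exact (Projectivization.mk_eq_mk_iff' ..).2 ⟨_, (frameMatrix_mulVec_zero_one v).symm⟩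
  · exact (Projectivization.mk_eq_mk_iff' ..).2 ⟨_, (frameMatrix_mulVec_one_one v).symm⟩

lemma exists_generalLinearGroup_smul_eq {s t : Fin 3 → ℙ K (Fin 2 → K)}
    (hs : Function.Injective s) (ht : Function.Injective t) : ∃ g : GL (Fin 2) K, g • s = t := by
  obtain ⟨g, rfl⟩ := exists_generalLinearGroup_smul_standardFrame_eq hs
  obtain ⟨h, rfl⟩ := exists_generalLinearGroup_smul_standardFrame_eq ht
  exact ⟨h * g⁻¹, by rw [mul_smul, inv_smul_smul]⟩

end TripleDet

section TripleSign

variable {F : Type*} [Field F] [Fintype F] [DecidableEq F]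

/-- The sign `χ (tripleDet v)` of a triple of points of the projective line represented by vectors
`v i`; it is `0` when the points are not distinct. -/
def tripleSign (t : Fin 3 → ℙ F (Fin 2 → F)) : ℤ :=
  quadraticChar F (tripleDet fun i ↦ (t i).rep)

lemma tripleSign_mk (v : Fin 3 → Fin 2 → F) (hv : ∀ i, v i ≠ 0) :
    tripleSign (fun i ↦ .mk F (v i) (hv i)) = quadraticChar F (tripleDet v) := by
  choose a ha using fun i ↦ Projectivization.exists_smul_eq_mk_rep F (v i) (hv i)
  have ha0 : ∏ i, (a i : F) ≠ 0 := Finset.prod_ne_zero_iff.2 fun i _ ↦ (a i).ne_zero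
  simp only [tripleSign, ← ha, Units.smul_def]
  rw [tripleDet_smul, map_mul, quadraticChar_sq_one' ha0, one_mul]

lemma tripleSign_ne_zero_iff {t : Fin 3 → ℙ F (Fin 2 → F)} :
    tripleSign t ≠ 0 ↔ Function.Injective t := by
  rw [← tripleDet_rep_ne_zero_iff, tripleSign, ne_eq, ne_eq, quadraticChar_eq_zero_iff]

lemma tripleSign_eq_one_or_neg_one {t : Fin 3 → ℙ F (Fin 2 → F)} (ht : Function.Injective t) :
    tripleSign t = 1 ∨ tripleSign t = -1 :=
  quadraticChar_dichotomy (tripleDet_rep_ne_zero_iff.2 ht)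

lemma tripleSign_smul (g : GL (Fin 2) F) (t : Fin 3 → ℙ F (Fin 2 → F)) :
    tripleSign (g • t) = quadraticChar F g.det * tripleSign t := by
  have hgv (i) : g.val *ᵥ (t i).rep ≠ 0 := (smul_ne_zero_iff_ne g).2 (t i).rep_nonzero
  have smul_eq_mk : g • t = fun i ↦ .mk F (g.val *ᵥ (t i).rep) (hgv i) := by
    ext1 i
    conv_lhs => rw [Pi.smul_apply, ← (t i).mk_rep]
    rfl
  have det_ne_zero : g.val.det ≠ 0 := g.det.ne_zero
  have cube_eq : quadraticChar F (g.val.det ^ 3) = quadraticChar F g.val.det := by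
    rw [pow_succ, map_mul, quadraticChar_sq_one' det_ne_zero, one_mul]
  rw [smul_eq_mk, tripleSign_mk, tripleDet_mulVec, map_mul, cube_eq]
  rfl

lemma tripleSign_specialLinearGroup_smul (g : SL(2, F)) (t : Fin 3 → ℙ F (Fin 2 → F)) :
    tripleSign (g • t) = tripleSign t := by
  have smul_eq : g • t = (g : GL (Fin 2) F) • t := rfl
  rw [smul_eq, tripleSign_smul]
  simp

theorem orbit_eq_setOf_tripleSign_eq {t : Fin 3 → ℙ F (Fin 2 → F)} (ht : Function.Injective t) :
    MulAction.orbit SL(2, F) t = {s | tripleSign s = tripleSign t} := by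
  ext s
  refine ⟨?_, fun hst ↦ ?_⟩
  · rintro ⟨g, rfl⟩
    exact tripleSign_specialLinearGroup_smul g t
  · have ht0 : tripleSign t ≠ 0 := tripleSign_ne_zero_iff.2 ht
    have hs : Function.Injective s := tripleSign_ne_zero_iff.1 (hst ▸ ht0)
    obtain ⟨g, rfl⟩ := exists_generalLinearGroup_smul_eq ht hs
    have det_isSquare : IsSquare g.det.val := by
      rw [← quadraticChar_one_iff_isSquare g.det.ne_zero]
      rw [Set.mem_ofPred_eq, tripleSign_smul] at hst
      exact (mul_eq_right₀ ht0).1 hst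
    obtain ⟨h, hh⟩ := exists_specialLinearGroup_smul_eq det_isSquare
    exact ⟨h, funext fun i ↦ hh (t i)⟩

lemma exists_quadraticChar_det_eq_neg_one (hF : ringChar F ≠ 2) :
    ∃ g : GL (Fin 2) F, quadraticChar F g.det = -1 := by
  obtain ⟨a, ha⟩ := quadraticChar_exists_neg_one hF
  have ha0 : a ≠ 0 := by rintro rfl; simp at ha
  exact ⟨.mkOfDetNeZero (diagonal ![a, 1]) (by simpa), by simpa using ha⟩

lemma ncard_tripleSign_eq_neg (hF : ringChar F ≠ 2) (ε : ℤ) :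
    {t : Fin 3 → ℙ F (Fin 2 → F) | tripleSign t = -ε}.ncard =
      {t : Fin 3 → ℙ F (Fin 2 → F) | tripleSign t = ε}.ncard := by
  obtain ⟨g, hg⟩ := exists_quadraticChar_det_eq_neg_one hF
  rw [← Set.ncard_smul_set g⁻¹]
  congr 1
  ext t
  rw [Set.mem_smul_set_iff_inv_smul_mem, inv_inv, Set.mem_ofPred_eq, tripleSign_smul, hg]
  simp

/-- The number of ordered triples of points of `B` with sign `ε`. -/
def signCount (B : Set (ℙ F (Fin 2 → F))) (ε : ℤ) : ℕ :=
  {t : Fin 3 → ℙ F (Fin 2 → F) | tripleSign t = ε ∧ Set.range t ⊆ B}.ncard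

theorem ncard_mul_ncard_blocks_eq_mul_signCount (B : Set (ℙ F (Fin 2 → F)))
    {t : Fin 3 → ℙ F (Fin 2 → F)} (ht : Function.Injective t) :
    {s : Fin 3 → ℙ F (Fin 2 → F) | tripleSign s = tripleSign t}.ncard *
        {S ∈ MulAction.orbit SL(2, F) B | Set.range t ⊆ S}.ncard =
      (MulAction.orbit SL(2, F) B).ncard * signCount B (tripleSign t) := by
  have range_subset_iff (g : SL(2, F)) (s : Fin 3 → ℙ F (Fin 2 → F)) (S : Set (ℙ F (Fin 2 → F))) :
      Set.range (g • s) ⊆ g • S ↔ Set.range s ⊆ S := by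
    have range_smul : Set.range (g • s) = g • Set.range s := Set.range_smul g s
    rw [range_smul, Set.smul_set_subset_smul_set_iff]
  have double_count := ncard_orbit_mul_ncard_incident
    (r := fun (s : Fin 3 → ℙ F (Fin 2 → F)) S ↦ Set.range s ⊆ S) range_subset_iff t B
  rwa [orbit_eq_setOf_tripleSign_eq ht] at double_count

variable (F) in
lemma tripleSign_standardFrame : tripleSign (standardFrame F) = 1 := by
  have frame_eq : standardFrame F =
      fun i ↦ .mk F (![![1, 0], ![0, 1], ![1, 1]] i) (by fin_cases i <;> simp) := by
    ext1 i
    fin_cases i <;> rfl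
  rw [frame_eq, tripleSign_mk]
  simp [tripleDet, Fin.prod_univ_three, det_fin_two]

lemma exists_tripleSign_eq_neg_one (hF : ringChar F ≠ 2) :
    ∃ t : Fin 3 → ℙ F (Fin 2 → F), tripleSign t = -1 := by
  obtain ⟨g, hg⟩ := exists_quadraticChar_det_eq_neg_one hF
  exact ⟨g • standardFrame F, by rw [tripleSign_smul, hg, tripleSign_standardFrame F, mul_one]⟩

end TripleSign

section Criterion

lemma designBlocks_eq_orbit (F : Type) [Field F] (k : ℕ) :
    designBlocks F k = MulAction.orbit SL(2, F) (starterB F k) := by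
  ext S
  exact exists_congr fun g ↦ eq_comm

lemma isThreeDesign_iff_forall_injective {F : Type} [Field F] {k lam : ℕ} :
    isThreeDesign F k lam ↔ 0 < lam ∧ ∀ t : Fin 3 → ℙ F (Fin 2 → F), Function.Injective t →
      {S ∈ designBlocks F k | Set.range t ⊆ S}.ncard = lam := by
  refine and_congr_right fun _ ↦ ⟨fun h t ht ↦ ?_, fun h T hT ↦ ?_⟩
  · simpa using h (Finset.univ.map ⟨t, ht⟩) (by simp)
  · let e := T.equivFinOfCardEq hT
    have range_eq : Set.range (fun i ↦ (e.symm i : ℙ F (Fin 2 → F))) = T := by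
      simp [Set.range_comp' Subtype.val e.symm]
    rw [← range_eq]
    exact h _ (Subtype.val_injective.comp e.symm.injective)

variable {F : Type} [Field F] [Fintype F] [DecidableEq F]

lemma ncard_mul_ncard_designBlocks (hF : ringChar F ≠ 2) (k : ℕ)
    {t : Fin 3 → ℙ F (Fin 2 → F)} (ht : Function.Injective t) :
    {s : Fin 3 → ℙ F (Fin 2 → F) | tripleSign s = 1}.ncard *
        {S ∈ designBlocks F k | Set.range t ⊆ S}.ncard =
      (designBlocks F k).ncard * signCount (starterB F k) (tripleSign t) := by
  rw [designBlocks_eq_orbit, ← ncard_mul_ncard_blocks_eq_mul_signCount _ ht]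
  congr 1
  rcases tripleSign_eq_one_or_neg_one ht with h | h <;> rw [h]
  exact (ncard_tripleSign_eq_neg hF 1).symm

theorem gives3Design_iff_signCount_eq (hF : ringChar F ≠ 2) (k : ℕ) :
    gives3Design F k ↔ signCount (starterB F k) 1 = signCount (starterB F k) (-1) ∧
      signCount (starterB F k) 1 ≠ 0 := by
  have double_count (t) := ncard_mul_ncard_designBlocks hF k (t := t)
  obtain ⟨t, ht⟩ : ∃ t : Fin 3 → ℙ F (Fin 2 → F), tripleSign t = 1 :=
    ⟨_, tripleSign_standardFrame F⟩
  obtain ⟨s, hs⟩ := exists_tripleSign_eq_neg_one hF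
  have ht_inj : Function.Injective t := tripleSign_ne_zero_iff.1 (by simp [ht])
  have hs_inj : Function.Injective s := tripleSign_ne_zero_iff.1 (by simp [hs])
  have triples_ne_zero : {s : Fin 3 → ℙ F (Fin 2 → F) | tripleSign s = 1}.ncard ≠ 0 :=
    Set.ncard_ne_zero_of_mem ht
  have blocks_ne_zero : (designBlocks F k).ncard ≠ 0 := by
    rw [designBlocks_eq_orbit]
    exact Set.ncard_ne_zero_of_mem (MulAction.mem_orbit_self _)
  simp only [gives3Design, isThreeDesign_iff_forall_injective]
  constructor
  · rintro ⟨lam, hlam, hdesign⟩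
    have ht_count := double_count t ht_inj
    have hs_count := double_count s hs_inj
    rw [hdesign t ht_inj, ht] at ht_count
    rw [hdesign s hs_inj, hs] at hs_count
    exact ⟨mul_left_cancel₀ blocks_ne_zero (ht_count.symm.trans hs_count),
      right_ne_zero_of_mul (ht_count ▸ mul_ne_zero triples_ne_zero hlam.ne')⟩
  · rintro ⟨heq, hne⟩
    have count_eq (u : Fin 3 → ℙ F (Fin 2 → F)) (hu : Function.Injective u) :
        {s : Fin 3 → ℙ F (Fin 2 → F) | tripleSign s = 1}.ncard *
            {S ∈ designBlocks F k | Set.range u ⊆ S}.ncard =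
          (designBlocks F k).ncard * signCount (starterB F k) 1 := by
      rw [double_count u hu]
      rcases tripleSign_eq_one_or_neg_one hu with h | h <;> rw [h]
      rw [heq]
    have lam_ne_zero : {S ∈ designBlocks F k | Set.range t ⊆ S}.ncard ≠ 0 :=
      right_ne_zero_of_mul (count_eq t ht_inj ▸ mul_ne_zero blocks_ne_zero hne)
    exact ⟨_, Nat.pos_of_ne_zero lam_ne_zero, fun u hu ↦
      mul_left_cancel₀ triples_ne_zero ((count_eq u hu).trans (count_eq t ht_inj).symm)⟩

end Criterion

section RootTriples

/-- The ordered triples of `k`-th roots of unity in `F` whose sign, as a triple of points of the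
projective line, is `ε`. -/
def rootTriples (F : Type*) [Field F] [Fintype F] [DecidableEq F] (k : ℕ) (ε : ℤ) :
    Set (Fin 3 → F) :=
  {x | (∀ i, x i ^ k = 1) ∧ ∏ i, quadraticChar F (x i - x (i + 1)) = ε}

variable {F : Type} [Field F]

lemma embedPt_injective : Function.Injective (embedPt F) := by
  intro x y h
  obtain ⟨c, hc⟩ := (Projectivization.mk_eq_mk_iff' ..).1 h
  have hc1 : c = 1 := by simpa using congrFun hc 1
  simpa [hc1] using (congrFun hc 0).symm

variable [Fintype F] [DecidableEq F]

lemma tripleSign_embedPt (x : Fin 3 → F) :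
    tripleSign (fun i ↦ embedPt F (x i)) = ∏ i, quadraticChar F (x i - x (i + 1)) := by
  simp only [embedPt, tripleSign_mk, tripleDet, map_prod]
  simp [det_fin_two]

lemma signCount_starterB (k : ℕ) (ε : ℤ) :
    signCount (starterB F k) ε = (rootTriples F k ε).ncard := by
  rw [signCount, ← Set.ncard_image_of_injective (rootTriples F k ε)
    (Function.Injective.comp_left (α := Fin 3) embedPt_injective)]
  congr 1
  ext t
  constructor
  · rintro ⟨hsign, hrange⟩
    choose x hx hxt using Set.range_subset_iff.1 hrange
    obtain rfl : (fun i ↦ embedPt F (x i)) = t := funext hxt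
    exact ⟨x, ⟨hx, tripleSign_embedPt x ▸ hsign⟩, rfl⟩
  · rintro ⟨x, ⟨hx, hsign⟩, rfl⟩
    exact ⟨(tripleSign_embedPt x).trans hsign,
      Set.range_subset_iff.2 fun i ↦ Set.mem_image_of_mem _ (hx i)⟩

end RootTriples

section FifthRoots

lemma isSquare_of_pow_eq_one_of_odd {M : Type*} [Monoid M] {x : M} {k : ℕ} (hk : Odd k)
    (hx : x ^ k = 1) : IsSquare x := by
  obtain ⟨m, rfl⟩ := hk
  refine ⟨x ^ (m + 1), ?_⟩
  calc x = x ^ (2 * m + 1) * x := by rw [hx, one_mul]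
    _ = x ^ (m + 1) * x ^ (m + 1) := by rw [← pow_succ, ← pow_add]; congr 1; ring

lemma isPrimitiveRoot_div {F : Type*} [Field F] {p : ℕ} (hp : p.Prime) {x y : F}
    (hx : x ^ p = 1) (hy : y ^ p = 1) (hxy : x ≠ y) : IsPrimitiveRoot (y / x) p := by
  have := Fact.mk hp
  have hx0 : x ≠ 0 := ne_zero_pow hp.ne_zero (by simp [hx])
  have hpow : (y / x) ^ p = 1 := by rw [div_pow, hx, hy, div_one]
  have hne : y / x ≠ 1 := fun h ↦ hxy ((div_eq_one_iff_eq hx0).1 h).symm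
  exact orderOf_eq_prime hpow hne ▸ IsPrimitiveRoot.orderOf (y / x)

lemma one_add_ne_zero_of_isPrimitiveRoot {R : Type*} [CommRing R] {r : R} {k : ℕ}
    (hr : IsPrimitiveRoot r k) (hk : 2 < k) : 1 + r ≠ 0 := by
  intro h
  have sq_eq_one : r ^ 2 = 1 := by linear_combination (r - 1) * h
  exact hk.not_ge (Nat.le_of_dvd two_pos (hr.dvd_of_pow_eq_one 2 sq_eq_one))

lemma apply_eq_apply_of_isPrimitiveRoot_five {R ι : Type*} [CommRing R] [IsDomain R] {f : R → ι}
    (hf : ∀ r, IsPrimitiveRoot r 5 → f (r ^ 2) = f r) {r s : R} (hr : IsPrimitiveRoot r 5)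
    (hs : IsPrimitiveRoot s 5) : f r = f s := by
  obtain ⟨i, hi, rfl⟩ := hs.eq_pow_of_pow_eq_one hr.pow_eq_one
  have hs2 : IsPrimitiveRoot (s ^ 2) 5 := hs.pow_of_coprime 2 (by norm_num)
  have hs4 : IsPrimitiveRoot ((s ^ 2) ^ 2) 5 := hs2.pow_of_coprime 2 (by norm_num)
  interval_cases i
  · simp at hr
  · rw [pow_one]
  · exact hf s hs
  · have cube_eq : s ^ 3 = ((s ^ 2) ^ 2) ^ 2 := by linear_combination (-s ^ 3) * hs.pow_eq_one
    rw [cube_eq, hf _ hs4, hf _ hs2, hf _ hs]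
  · rw [show s ^ 4 = (s ^ 2) ^ 2 by ring, hf _ hs2, hf _ hs]

variable {F : Type*} [Field F] [Fintype F] [DecidableEq F]

lemma quadraticChar_eq_one_of_pow_eq_one {x : F} {k : ℕ} (hk : Odd k) (hx : x ^ k = 1) :
    quadraticChar F x = 1 := by
  have hx0 : x ≠ 0 := ne_zero_pow hk.pos.ne' (by simp [hx])
  exact (quadraticChar_one_iff_isSquare hx0).2 (isSquare_of_pow_eq_one_of_odd hk hx)

lemma quadraticChar_add_eq_one_add_div {k : ℕ} (hk : Odd k) {x : F} (hx : x ^ k = 1) (y : F) :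
    quadraticChar F (x + y) = quadraticChar F (1 + y / x) := by
  have hx0 : x ≠ 0 := ne_zero_pow hk.pos.ne' (by simp [hx])
  rw [← one_mul (quadraticChar F (1 + y / x)), ← quadraticChar_eq_one_of_pow_eq_one hk hx,
    ← map_mul, mul_add, mul_one, mul_div_cancel₀ _ hx0]

lemma quadraticChar_one_add_sq_of_isPrimitiveRoot_five (hneg : quadraticChar F (-1) = 1) {r : F}
    (hr : IsPrimitiveRoot r 5) : quadraticChar F (1 + r ^ 2) = quadraticChar F (1 + r) := by
  have geom_sum : 1 + r + r ^ 2 + r ^ 3 + r ^ 4 = 0 := by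
    simpa [Finset.sum_range_succ] using hr.geom_sum_eq_zero (by norm_num)
  have mul_eq : (1 + r) * (1 + r ^ 2) = -1 * r ^ 4 := by linear_combination geom_sum
  have hr4 : quadraticChar F (r ^ 4) = 1 := by
    rw [map_pow, quadraticChar_eq_one_of_pow_eq_one (by decide) hr.pow_eq_one, one_pow]
  have char_mul : quadraticChar F (1 + r) * quadraticChar F (1 + r ^ 2) = 1 := by
    rw [← map_mul, mul_eq, map_mul, hneg, hr4, one_mul]
  exact (Int.eq_of_mul_eq_one char_mul).symm

variable {β : F}

lemma quadraticChar_add_of_pow_five_eq_one (hneg : quadraticChar F (-1) = 1)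
    (hβ : IsPrimitiveRoot β 5) {x y : F} (hx : x ^ 5 = 1) (hy : y ^ 5 = 1) (hxy : x ≠ y) :
    quadraticChar F (x + y) = quadraticChar F (1 + β) := by
  rw [quadraticChar_add_eq_one_add_div (by decide) hx]
  exact apply_eq_apply_of_isPrimitiveRoot_five (f := fun r ↦ quadraticChar F (1 + r))
    (fun r ↦ quadraticChar_one_add_sq_of_isPrimitiveRoot_five hneg)
    (isPrimitiveRoot_div Nat.prime_five hx hy hxy) hβ

lemma quadraticChar_sq_sub_sq_of_pow_five_eq_one (hneg : quadraticChar F (-1) = 1)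
    (hβ : IsPrimitiveRoot β 5) {x y : F} (hx : x ^ 5 = 1) (hy : y ^ 5 = 1) :
    quadraticChar F (x ^ 2 - y ^ 2) = quadraticChar F (1 + β) * quadraticChar F (x - y) := by
  obtain rfl | hxy := eq_or_ne x y
  · simp
  · rw [sq_sub_sq, map_mul, quadraticChar_add_of_pow_five_eq_one hneg hβ hx hy hxy]

lemma quadraticChar_sub_of_pow_five_eq_one (hneg : quadraticChar F (-1) = 1)
    (hβ : IsPrimitiveRoot β 5) (hsquare : quadraticChar F (1 + β) = 1) {x y : F}
    (hx : x ^ 5 = 1) (hy : y ^ 5 = 1) (hxy : x ≠ y) :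
    quadraticChar F (x - y) = quadraticChar F (1 - β) := by
  rw [sub_eq_add_neg, quadraticChar_add_eq_one_add_div (by decide) hx, neg_div, ← sub_eq_add_neg]
  refine apply_eq_apply_of_isPrimitiveRoot_five (f := fun r ↦ quadraticChar F (1 - r))
    (fun r hr ↦ ?_) (isPrimitiveRoot_div Nat.prime_five hx hy hxy) hβ
  calc quadraticChar F (1 - r ^ 2)
    _ = quadraticChar F (1 + β) * quadraticChar F (1 - r) := by
      simpa only [one_pow] using
        quadraticChar_sq_sub_sq_of_pow_five_eq_one hneg hβ (one_pow 5) hr.pow_eq_one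
    _ = quadraticChar F (1 - r) := by rw [hsquare, one_mul]

lemma ncard_rootTriples_le_neg (hneg : quadraticChar F (-1) = 1) (hβ : IsPrimitiveRoot β 5)
    (hnonsquare : quadraticChar F (1 + β) = -1) (ε : ℤ) :
    (rootTriples F 5 ε).ncard ≤ (rootTriples F 5 (-ε)).ncard := by
  have eq_of_sq_eq {x y : F} (hx : x ^ 5 = 1) (hy : y ^ 5 = 1) (h : x ^ 2 = y ^ 2) : x = y := by
    linear_combination (x ^ 4 + x ^ 2 * y ^ 2 + y ^ 4) * h - x * hx + y * hy
  refine Set.ncard_le_ncard_of_injOn (fun x i ↦ x i ^ 2) ?_ ?_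
  · rintro x ⟨hx, rfl⟩
    refine ⟨fun i ↦ by rw [pow_right_comm, hx, one_pow], ?_⟩
    simp [quadraticChar_sq_sub_sq_of_pow_five_eq_one hneg hβ (hx _) (hx _), hnonsquare,
      Fin.prod_univ_three]
  · intro x hx y hy hxy
    exact funext fun i ↦ eq_of_sq_eq (hx.1 i) (hy.1 i) (congrFun hxy i)

lemma ncard_rootTriples_one_eq_neg_one (hneg : quadraticChar F (-1) = 1) (hβ : IsPrimitiveRoot β 5)
    (hnonsquare : quadraticChar F (1 + β) = -1) :
    (rootTriples F 5 1).ncard = (rootTriples F 5 (-1)).ncard :=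
  (ncard_rootTriples_le_neg hneg hβ hnonsquare 1).antisymm
    (by simpa using ncard_rootTriples_le_neg hneg hβ hnonsquare (-1))

lemma eq_quadraticChar_one_sub_of_mem_rootTriples (hneg : quadraticChar F (-1) = 1)
    (hβ : IsPrimitiveRoot β 5) (hsquare : quadraticChar F (1 + β) = 1) {ε : ℤ} (hε : ε ≠ 0)
    {x : Fin 3 → F} (hx : x ∈ rootTriples F 5 ε) : ε = quadraticChar F (1 - β) := by
  obtain ⟨hroot, rfl⟩ := hx
  have hdistinct (i : Fin 3) : x i ≠ x (i + 1) := fun h ↦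
    Finset.prod_ne_zero_iff.1 hε i (Finset.mem_univ i) (by rw [h, sub_self, quadraticChar_zero])
  have one_sub_ne_zero : 1 - β ≠ 0 := sub_ne_zero.2 (hβ.ne_one (by norm_num)).symm
  calc ∏ i, quadraticChar F (x i - x (i + 1))
    _ = ∏ _i : Fin 3, quadraticChar F (1 - β) :=
      Finset.prod_congr rfl fun i _ ↦
        quadraticChar_sub_of_pow_five_eq_one hneg hβ hsquare (hroot _) (hroot _) (hdistinct i)
    _ = quadraticChar F (1 - β) ^ 2 * quadraticChar F (1 - β) := by
      rw [Fin.prod_const, pow_succ]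
    _ = quadraticChar F (1 - β) := by rw [quadraticChar_sq_one one_sub_ne_zero, one_mul]

lemma exists_mem_rootTriples (hβ : IsPrimitiveRoot β 5) :
    ∃ x, x ∈ rootTriples F 5 1 ∨ x ∈ rootTriples F 5 (-1) := by
  have hdistinct (i : Fin 3) : β ^ (i : ℕ) ≠ β ^ ((i + 1 : Fin 3) : ℕ) := fun h ↦ by
    have := hβ.pow_inj (by lia) (by lia) h
    lia
  have hroot (i : Fin 3) : (β ^ (i : ℕ)) ^ 5 = 1 := by rw [pow_right_comm, hβ.pow_eq_one, one_pow]
  have hprod_ne_zero : ∏ i : Fin 3, (β ^ (i : ℕ) - β ^ ((i + 1 : Fin 3) : ℕ)) ≠ 0 :=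
    Finset.prod_ne_zero_iff.2 fun i _ ↦ sub_ne_zero.2 (hdistinct i)
  have hsign := quadraticChar_dichotomy hprod_ne_zero
  rw [map_prod] at hsign
  exact ⟨fun i ↦ β ^ (i : ℕ), hsign.imp (⟨hroot, ·⟩) (⟨hroot, ·⟩)⟩

end FifthRoots

/-- Theorem 4.1, (i) ↔ (iii): for `q ≡ 1 (mod 20)` and `β` a primitive 5th root
of unity, `(q,5)` gives a 3-design iff `χ(1+β) = -1`. -/
theorem stmt_12 (F : Type) [Field F] [Fintype F] [DecidableEq F]
    (q : ℕ) (hq : Fintype.card F = q) (hq20 : q % 20 = 1)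
    (β : F) (hβ : orderOf β = 5) :
    gives3Design F 5 ↔ quadraticChar F (1 + β) = -1 := by
  have hβ5 : IsPrimitiveRoot β 5 := hβ ▸ IsPrimitiveRoot.orderOf β
  have hF : ringChar F ≠ 2 := fun h ↦ by
    have := FiniteField.even_card_of_char_two h
    lia
  have hneg : quadraticChar F (-1) = 1 := by
    rw [quadraticChar_one_iff_isSquare (by simp), FiniteField.isSquare_neg_one_iff]
    lia
  simp only [gives3Design_iff_signCount_eq hF, signCount_starterB]
  constructor
  · rintro ⟨hcard, hcard0⟩
    refine (quadraticChar_dichotomy (one_add_ne_zero_of_isPrimitiveRoot hβ5 (by lia))).resolve_left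
      fun hsquare ↦ ?_
    obtain ⟨x, hx⟩ := Set.nonempty_of_ncard_ne_zero hcard0
    obtain ⟨y, hy⟩ := Set.nonempty_of_ncard_ne_zero (hcard ▸ hcard0)
    have hsign {ε : ℤ} := eq_quadraticChar_one_sub_of_mem_rootTriples hneg hβ5 hsquare (ε := ε)
    exact absurd ((hsign (by decide) hx).trans (hsign (by decide) hy).symm) (by decide)
  · intro hnonsquare
    have hcard := ncard_rootTriples_one_eq_neg_one hneg hβ5 hnonsquare
    refine ⟨hcard, ?_⟩
    obtain ⟨x, hx | hx⟩ := exists_mem_rootTriples hβ5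
    · exact Set.ncard_ne_zero_of_mem hx
    · exact hcard ▸ Set.ncard_ne_zero_of_mem hx
end
end

section
/- Let q be a prime power with q ≡ 1 (mod 20) and let β be a primitive 5th root of unity in F_q. Then χ(1+β) = −1 if and only if there exists θ ∈ F_q^× with χ(θ) = −1 and θ² − 4θ − 1 = 0, where χ is the quadratic residue character of F_q. -/
/-!
Put `s = β² + β³ = β² (1 + β)`, which has the same quadratic character as `1 + β` and satisfies
`s² + s = 1`. In particular `s` is a unit with inverse `s + 1`, and the roots of `θ² - 4θ - 1` are
`-s³` and `s⁻³ = (s + 1)³`. Since `-1` is a square, both differ from `s` by a unit square, so every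
root is a square exactly when `1 + β` is.
-/

section CommMonoid

variable {M : Type*} [CommMonoid M] {a : M}

theorem isSquare_mul_iff_right_of_isUnit {u : M} (hu : IsUnit u) (husq : IsSquare u) :
    IsSquare (u * a) ↔ IsSquare a := by
  refine ⟨?_, husq.mul⟩
  obtain ⟨r, rfl⟩ := husq
  obtain ⟨v, rfl⟩ := isUnit_of_mul_isUnit_left hu
  rintro ⟨b, hb⟩
  refine ⟨↑v⁻¹ * b, ?_⟩
  calc a = ↑v⁻¹ * ↑v⁻¹ * (↑v * ↑v * a) := by simp [mul_assoc]
    _ = ↑v⁻¹ * b * (↑v⁻¹ * b) := by rw [hb, mul_mul_mul_comm]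

theorem isSquare_pow_iff_of_odd_of_isUnit {n : ℕ} (hn : Odd n) (ha : IsUnit a) :
    IsSquare (a ^ n) ↔ IsSquare a := by
  obtain ⟨k, rfl⟩ := hn
  rw [pow_succ, isSquare_mul_iff_right_of_isUnit (ha.pow _) ((even_two_mul k).isSquare_pow a)]

theorem isSquare_iff_of_mul_eq_one {b : M} (hab : a * b = 1) : IsSquare a ↔ IsSquare b := by
  have ha : a = a ^ 2 * b := by rw [sq, mul_assoc, hab, mul_one]
  have hunit : IsUnit (a ^ 2) := (IsUnit.of_mul_eq_one b hab).pow 2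
  rw [ha, isSquare_mul_iff_right_of_isUnit hunit (.sq a)]

end CommMonoid

section CommRing

variable {R : Type*} [CommRing R]

theorem isSquare_neg_iff_of_isSquare_neg_one (hneg : IsSquare (-1 : R)) {a : R} :
    IsSquare (-a) ↔ IsSquare a := by
  rw [neg_eq_neg_one_mul, isSquare_mul_iff_right_of_isUnit isUnit_one.neg hneg]

variable [IsDomain R]

theorem sq_sub_four_mul_sub_one_eq_zero_iff {s : R} (hs : s ^ 2 + s = 1) {θ : R} :
    θ ^ 2 - 4 * θ - 1 = 0 ↔ θ = -s ^ 3 ∨ θ = (s + 1) ^ 3 := by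
  have factorization : θ ^ 2 - 4 * θ - 1 = (θ - -s ^ 3) * (θ - (s + 1) ^ 3) := by
    have hneg_cube : -s ^ 3 = 1 - 2 * s := by linear_combination (1 - s) * hs
    have hcube : (s + 1) ^ 3 = 3 + 2 * s := by linear_combination (s + 2) * hs
    rw [hneg_cube, hcube]
    linear_combination 4 * hs
  rw [factorization, mul_eq_zero, sub_eq_zero, sub_eq_zero]

theorem isSquare_iff_of_sq_sub_four_mul_sub_one_eq_zero (hneg : IsSquare (-1 : R)) {s θ : R}
    (hs : s ^ 2 + s = 1) (hθ : θ ^ 2 - 4 * θ - 1 = 0) : IsSquare θ ↔ IsSquare s := by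
  have hinv : s * (s + 1) = 1 := by linear_combination hs
  have hodd : Odd 3 := by decide
  rcases (sq_sub_four_mul_sub_one_eq_zero_iff hs).mp hθ with rfl | rfl
  · rw [isSquare_neg_iff_of_isSquare_neg_one hneg,
      isSquare_pow_iff_of_odd_of_isUnit hodd (.of_mul_eq_one _ hinv)]
  · rw [isSquare_pow_iff_of_odd_of_isUnit hodd (.of_mul_eq_one_right _ hinv),
      isSquare_iff_of_mul_eq_one hinv]

theorem sq_add_self_eq_one_of_isPrimitiveRoot_five {β : R} (hβ : IsPrimitiveRoot β 5) :
    (β ^ 2 * (1 + β)) ^ 2 + β ^ 2 * (1 + β) = 1 := by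
  have hsum : 1 + β + β ^ 2 + β ^ 3 + β ^ 4 = 0 := by
    simpa [Finset.sum_range_succ] using hβ.geom_sum_eq_zero (by norm_num)
  linear_combination (2 + β) * hβ.pow_eq_one + hsum

theorem stmt_14_general (hneg : IsSquare (-1 : R)) {β : R} (hβ : IsPrimitiveRoot β 5) :
    ¬IsSquare (1 + β) ↔ ∃ θ : R, ¬IsSquare θ ∧ θ ^ 2 - 4 * θ - 1 = 0 := by
  have hs := sq_add_self_eq_one_of_isPrimitiveRoot_five hβ
  have hroot {θ : R} (hθ : θ ^ 2 - 4 * θ - 1 = 0) : IsSquare θ ↔ IsSquare (1 + β) := by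
    rw [isSquare_iff_of_sq_sub_four_mul_sub_one_eq_zero hneg hs hθ,
      isSquare_mul_iff_right_of_isUnit ((hβ.isUnit (by norm_num)).pow 2) (.sq β)]
  constructor
  · intro h
    have hθ := (sq_sub_four_mul_sub_one_eq_zero_iff hs).mpr (.inl rfl)
    exact ⟨_, (hroot hθ).not.mpr h, hθ⟩
  · rintro ⟨θ, hsq, hθ⟩
    exact (hroot hθ).not.mp hsq

end CommRing

/-- Theorem 4.1, (iii) ↔ (iv): for `q ≡ 1 (mod 20)` and `β` a primitive 5th root
of unity in `F_q`, `χ(1+β) = -1` iff there exists a nonsquare `θ ∈ F_qˣ` with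
`θ² - 4θ - 1 = 0`, where `χ` is the quadratic residue character. -/
theorem stmt_14 (F : Type) [Field F] [Fintype F] [DecidableEq F]
    (q : ℕ) (hq : Fintype.card F = q) (hq20 : q % 20 = 1)
    (β : F) (hβ : orderOf β = 5) :
    quadraticChar F (1 + β) = -1 ↔
      ∃ θ : F, θ ≠ 0 ∧ quadraticChar F θ = -1 ∧ θ ^ 2 - 4 * θ - 1 = 0 := by
  have hneg : IsSquare (-1 : F) := FiniteField.isSquare_neg_one_iff.mpr (by omega)
  have hne {θ : F} (h : ¬IsSquare θ) : θ ≠ 0 := by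
    rintro rfl
    exact h .zero
  simp only [quadraticChar_neg_one_iff_not_isSquare]
  rw [stmt_14_general hneg (hβ ▸ IsPrimitiveRoot.orderOf β)]
  exact exists_congr fun θ ↦ ⟨fun h ↦ ⟨hne h.1, h⟩, And.right⟩
end

section
/- Let q be a prime power with q ≡ 1 (mod 20), let α be a primitive root (generator of F_q^×), and let β be a primitive 5th root of unity in F_q. Then χ(1+β) = −1 if and only if 5 is not an element of the subgroup ⟨α⁴⟩ of F_q^× (equivalently, 5 is not a fourth power in F_q^×), where χ is the quadratic residue character of F_q. -/
/-!
The quadratic Gauss sum `s = β - β² - β³ + β⁴` satisfies `s² = 5`, and it factors as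
`s = (β³(1 - β))² (1 + β)`, so `1 + β` is a square exactly when `s` is. When `-1` is a square,
`x⁴ = s²`, i.e. `x² = ±s`, is solvable exactly when `s` is a square.
-/

theorem zpowers_pow_eq_range_powMonoidHom {G : Type*} [CommGroup G] {g : G}
    (hg : Subgroup.zpowers g = ⊤) (n : ℕ) :
    Subgroup.zpowers (g ^ n) = (powMonoidHom n : G →* G).range := by
  rw [MonoidHom.range_eq_map, ← hg, MonoidHom.map_zpowers, powMonoidHom_apply]

theorem exists_pow_four_eq_sq_iff_isSquare {R : Type*} [CommRing R] [NoZeroDivisors R]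
    (hneg : IsSquare (-1 : R)) (a : R) : (∃ x, x ^ 4 = a ^ 2) ↔ IsSquare a := by
  constructor
  · rintro ⟨x, hx⟩
    have hsq : (x ^ 2) ^ 2 = a ^ 2 := by rw [← hx]; ring
    rcases sq_eq_sq_iff_eq_or_eq_neg.mp hsq with h | h
    · exact h ▸ IsSquare.sq x
    · have ha : a = -1 * x ^ 2 := by rw [h]; ring
      exact ha ▸ hneg.mul (IsSquare.sq x)
  · rintro ⟨r, rfl⟩
    exact ⟨r, by ring⟩

section CommGroupWithZero

variable {M : Type*} [CommGroupWithZero M]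

theorem isSquare_sq_mul_iff {t : M} (ht : t ≠ 0) (a : M) :
    IsSquare (t ^ 2 * a) ↔ IsSquare a := by
  refine ⟨fun h ↦ ?_, (IsSquare.sq t).mul⟩
  simpa only [mul_div_cancel_left₀ a (pow_ne_zero 2 ht)] using h.div (IsSquare.sq t)

theorem exists_pow_eq_iff_exists_mem_range_powMonoidHom {n : ℕ} (hn : n ≠ 0) {a : M}
    (ha : a ≠ 0) :
    (∃ x, x ^ n = a) ↔ ∃ u : Mˣ, (u : M) = a ∧ u ∈ (powMonoidHom n : Mˣ →* Mˣ).range := by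
  constructor
  · rintro ⟨x, rfl⟩
    have hx : x ≠ 0 := (pow_ne_zero_iff hn).mp ha
    exact ⟨Units.mk0 x hx ^ n, by simp, Units.mk0 x hx, rfl⟩
  · rintro ⟨_, rfl, v, rfl⟩
    exact ⟨v, by simp⟩

end CommGroupWithZero

/-- The quadratic Gauss sum `∑ a, (a / 5) * ζ ^ a` of a fifth root of unity `ζ`, with the values
of the Legendre symbol modulo `5` written out. -/
def quadraticGaussSumFive {R : Type*} [CommRing R] (ζ : R) : R :=
  ζ - ζ ^ 2 - ζ ^ 3 + ζ ^ 4

theorem quadraticGaussSumFive_eq_sq_mul {R : Type*} [CommRing R] {ζ : R} (hζ : ζ ^ 5 = 1) :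
    quadraticGaussSumFive ζ = (ζ ^ 3 * (1 - ζ)) ^ 2 * (1 + ζ) := by
  unfold quadraticGaussSumFive
  linear_combination -(ζ * (1 - ζ) ^ 2 * (1 + ζ)) * hζ

theorem quadraticGaussSumFive_sq {R : Type*} [CommRing R] [IsDomain R] {ζ : R}
    (hζ : IsPrimitiveRoot ζ 5) : quadraticGaussSumFive ζ ^ 2 = 5 := by
  have hsum : 1 + ζ + ζ ^ 2 + ζ ^ 3 + ζ ^ 4 = 0 := by
    simpa [Finset.sum_range_succ] using hζ.geom_sum_eq_zero (by norm_num)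
  unfold quadraticGaussSumFive
  linear_combination (4 - ζ - 2 * ζ ^ 2 + ζ ^ 3) * hζ.pow_eq_one - hsum

section PrimitiveFifthRoot

variable {F : Type*} [Field F] {β : F}

theorem isSquare_quadraticGaussSumFive_iff (hβ : IsPrimitiveRoot β 5) :
    IsSquare (quadraticGaussSumFive β) ↔ IsSquare (1 + β) := by
  have hβ_ne_zero : β ≠ 0 := hβ.ne_zero (by norm_num)
  have hβ_ne_one : β ≠ 1 := hβ.ne_one (by norm_num)
  rw [quadraticGaussSumFive_eq_sq_mul hβ.pow_eq_one]
  exact isSquare_sq_mul_iff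
    (mul_ne_zero (pow_ne_zero 3 hβ_ne_zero) (sub_ne_zero.mpr hβ_ne_one.symm)) _

theorem isSquare_one_add_iff_exists_pow_four_eq_five (hneg : IsSquare (-1 : F))
    (hβ : IsPrimitiveRoot β 5) : IsSquare (1 + β) ↔ ∃ x : F, x ^ 4 = 5 := by
  rw [← isSquare_quadraticGaussSumFive_iff hβ, ← exists_pow_four_eq_sq_iff_isSquare hneg,
    quadraticGaussSumFive_sq hβ]

theorem stmt_15_general (hneg : IsSquare (-1 : F)) (hβ : IsPrimitiveRoot β 5) :
    ¬IsSquare (1 + β) ↔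
      ∀ u : Fˣ, (u : F) = 5 → u ∉ (powMonoidHom 4 : Fˣ →* Fˣ).range := by
  have h_five : (5 : F) ≠ 0 := by exact_mod_cast hβ.neZero'.ne
  rw [isSquare_one_add_iff_exists_pow_four_eq_five hneg hβ,
    exists_pow_eq_iff_exists_mem_range_powMonoidHom four_ne_zero h_five]
  simp only [not_exists, not_and]

end PrimitiveFifthRoot

/-- Theorem 4.1, (iii) ↔ (v): for `q ≡ 1 (mod 20)`, `α` a primitive root of `F_q`
and `β` a primitive 5th root of unity, `χ(1+β) = -1` iff `5 ∉ ⟨α⁴⟩`, i.e. `5` is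
not a fourth power in `F_qˣ`. -/
theorem stmt_15 (F : Type) [Field F] [Fintype F] [DecidableEq F]
    (q : ℕ) (hq : Fintype.card F = q) (hq20 : q % 20 = 1)
    (α : Fˣ) (hα : ∀ x : Fˣ, x ∈ Subgroup.zpowers α)
    (β : F) (hβ : orderOf β = 5) :
    quadraticChar F (1 + β) = -1 ↔
      ∀ u : Fˣ, (u : F) = 5 → u ∉ Subgroup.zpowers (α ^ 4) := by
  have hneg : IsSquare (-1 : F) := FiniteField.isSquare_neg_one_iff.mpr (by omega)
  rw [quadraticChar_neg_one_iff_not_isSquare,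
    zpowers_pow_eq_range_powMonoidHom ((Subgroup.eq_top_iff' _).mpr hα)]
  exact stmt_15_general hneg (IsPrimitiveRoot.iff_orderOf.mpr hβ)
end
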